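/- Let n ≥ 2 and L ≥ 1 be integers and let r, s ∈ {1,…,n}. Define W_{rs} = Σ over dyads d ∈ D_n containing r and dyads d' ∈ D_n containing s of k_L(Δ(d,d')). Then |W_{rs} − (n−1)² k_L(|r−s|)| ≤ 6 n L. -/

import Mathlib

open Finset

/-- The dyad set `D_n = {(i,j) : 1 ≤ i < j ≤ n}`. -/
def dyads (n : ℕ) : Finset (ℕ × ℕ) :=
  (Finset.Icc 1 n ×ˢ Finset.Icc 1 n).filter (fun p => p.1 < p.2)

/-- The endpoint distance `Δ(d,d') = min{|i−p|, |i−q|, |j−p|, |j−q|}` between dyads. -/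
def endpointDist (d d' : ℕ × ℕ) : ℕ :=
  min (min (Nat.dist d.1 d'.1) (Nat.dist d.1 d'.2))
      (min (Nat.dist d.2 d'.1) (Nat.dist d.2 d'.2))

/-- The Bartlett kernel `k_L(h) = max(0, 1 − |h|/L)` for a natural lag `h`. -/
noncomputable def bartlett (L h : ℕ) : ℝ := max 0 (1 - (h : ℝ) / L)

/-!
Writing a dyad containing `r` as `{a, r}` and a dyad containing `s` as `{b, s}`, the endpoint
distance is the minimum of `|r - s|` and the three *accidental* distances `|a - b|`, `|a - s|`,
`|r - b|`. A decreasing nonnegative kernel `k` turns this minimum into a maximum, so replacing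
`k (Δ(d, d'))` by `k |r - s|` costs at most the sum of `k` over the accidental distances. Each of
these has a free endpoint, which is at distance less than `L` from the other one in at most `2 L`
positions, so each contributes at most `(n - 1) * 2 L * k 0` in total.
-/

lemma endpointDist_swap_left (d d' : ℕ × ℕ) : endpointDist d.swap d' = endpointDist d d' :=
  min_comm _ _

lemma endpointDist_swap_right (d d' : ℕ × ℕ) : endpointDist d d'.swap = endpointDist d d' :=
  congrArg₂ min (min_comm _ _) (min_comm _ _)

/-- The dyad with endpoints `a ≠ b`, given in either order: the dyad set lists the smaller endpoint
first. -/
def dyadOf (a b : ℕ) : ℕ × ℕ := (min a b, max a b)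

lemma dyadOf_eq_or_eq_swap (a b : ℕ) : dyadOf a b = (a, b) ∨ dyadOf a b = (a, b).swap := by
  rcases le_total a b with h | h <;> simp [dyadOf, h]

lemma endpointDist_dyadOf (a r b s : ℕ) :
    endpointDist (dyadOf a r) (dyadOf b s) = endpointDist (a, r) (b, s) := by
  rcases dyadOf_eq_or_eq_swap a r with h | h <;> rcases dyadOf_eq_or_eq_swap b s with h' | h' <;>
    simp only [h, h', endpointDist_swap_left, endpointDist_swap_right]

lemma sum_dyads_containing {M : Type*} [AddCommMonoid M] {n r : ℕ} (hr : r ∈ Icc 1 n)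
    (f : ℕ × ℕ → M) :
    ∑ d ∈ (dyads n).filter (fun d => d.1 = r ∨ d.2 = r), f d
      = ∑ a ∈ (Icc 1 n).erase r, f (dyadOf a r) := by
  rw [mem_Icc] at hr
  -- The other endpoint of a dyad `d` containing `r` is `d.1 + d.2 - r`.
  refine (sum_nbij' (fun a => dyadOf a r) (fun d => d.1 + d.2 - r) ?_ ?_ ?_ ?_ fun _ _ => rfl).symm
  all_goals
    simp only [dyads, dyadOf, mem_filter, mem_product, mem_Icc, mem_erase, Prod.ext_iff]
    omega

lemma card_filter_dist_lt_le (T : Finset ℕ) (c L : ℕ) :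
    #{b ∈ T | Nat.dist c b < L} ≤ 2 * L := by
  have subset_Ico : {b ∈ T | Nat.dist c b < L} ⊆ Ico (c + 1 - L) (c + L) := fun b hb => by
    have hb' := (mem_filter.1 hb).2
    rw [Nat.dist] at hb'
    rw [mem_Ico]
    omega
  calc #{b ∈ T | Nat.dist c b < L}
      ≤ #(Ico (c + 1 - L) (c + L)) := card_le_card subset_Ico
    _ = c + L - (c + 1 - L) := Nat.card_Ico _ _
    _ ≤ 2 * L := by omega

lemma nonneg_of_antitone_of_eq_zero {ι α : Type*} [SemilatticeSup ι] [Preorder α] [Zero α]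
    {k : ι → α} {l : ι} (hk : Antitone k) (hkl : ∀ h, l ≤ h → k h = 0) (h : ι) : 0 ≤ k h :=
  (hkl (h ⊔ l) le_sup_right).ge.trans (hk le_sup_left)

lemma sum_kernel_dist_le {M : Type*} [AddCommMonoid M] [PartialOrder M] [IsOrderedAddMonoid M]
    {k : ℕ → M} {L : ℕ} (hk : Antitone k) (hkL : ∀ h, L ≤ h → k h = 0) (T : Finset ℕ) (c : ℕ) :
    ∑ b ∈ T, k (Nat.dist c b) ≤ (2 * L) • k 0 := by
  have hk0 : 0 ≤ k 0 := nonneg_of_antitone_of_eq_zero hk hkL 0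
  calc ∑ b ∈ T, k (Nat.dist c b)
      = ∑ b ∈ T with Nat.dist c b < L, k (Nat.dist c b) :=
        (sum_filter_of_ne fun b _ hb => not_le.1 fun h => hb (hkL _ h)).symm
    _ ≤ #{b ∈ T | Nat.dist c b < L} • k 0 :=
        sum_le_card_nsmul _ _ _ fun b _ => hk (Nat.zero_le _)
    _ ≤ (2 * L) • k 0 := nsmul_le_nsmul_left hk0 (card_filter_dist_lt_le T c L)

lemma antitone_map_min_le_add {ι M : Type*} [LinearOrder ι] [AddCommMonoid M] [LinearOrder M]
    [IsOrderedAddMonoid M] {k : ι → M} (hk : Antitone k) {x y : ι} (hx : 0 ≤ k x) (hy : 0 ≤ k y) :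
    k (min x y) ≤ k x + k y :=
  hk.map_min.trans_le (max_le_add_of_nonneg hx hy)

section OrderedGroup

variable {M : Type*} [AddCommGroup M] [LinearOrder M] [IsOrderedAddMonoid M]

lemma abs_antitone_map_min_sub_right_le {ι : Type*} [LinearOrder ι] {k : ι → M} (hk : Antitone k)
    {x y : ι} (hx : 0 ≤ k x) (hy : 0 ≤ k y) : |k (min x y) - k y| ≤ k x := by
  rw [abs_of_nonneg (sub_nonneg.2 (hk (min_le_right x y))), sub_le_iff_le_add]
  exact antitone_map_min_le_add hk hx hy

lemma abs_kernel_endpointDist_sub_le {k : ℕ → M} (hk : Antitone k) (hk_nonneg : ∀ h, 0 ≤ k h)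
    (a r b s : ℕ) :
    |k (endpointDist (a, r) (b, s)) - k (Nat.dist r s)|
      ≤ k (Nat.dist a b) + k (Nat.dist s a) + k (Nat.dist r b) := by
  have min_le_add (x y : ℕ) : k (min x y) ≤ k x + k y :=
    antitone_map_min_le_add hk (hk_nonneg x) (hk_nonneg y)
  rw [endpointDist, ← min_assoc, Nat.dist_comm s a]
  calc |k (min (min (min (Nat.dist a b) (Nat.dist a s)) (Nat.dist r b)) (Nat.dist r s))
        - k (Nat.dist r s)|
      ≤ k (min (min (Nat.dist a b) (Nat.dist a s)) (Nat.dist r b)) :=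
        abs_antitone_map_min_sub_right_le hk (hk_nonneg _) (hk_nonneg _)
    _ ≤ k (min (Nat.dist a b) (Nat.dist a s)) + k (Nat.dist r b) := min_le_add _ _
    _ ≤ k (Nat.dist a b) + k (Nat.dist a s) + k (Nat.dist r b) := by
        gcongr
        exact min_le_add _ _

end OrderedGroup

section OrderedRing

variable {R : Type*} [CommRing R] [LinearOrder R] [IsOrderedRing R] {k : ℕ → R} {L : ℕ}

lemma abs_sum_sum_kernel_endpointDist_sub_le (hk : Antitone k) (hkL : ∀ h, L ≤ h → k h = 0)
    (A B : Finset ℕ) (r s : ℕ) :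
    |∑ a ∈ A, ∑ b ∈ B, k (endpointDist (a, r) (b, s)) - #A * #B * k (Nat.dist r s)|
      ≤ (2 * #A + #B) * (2 * L * k 0) := by
  have hk_nonneg := nonneg_of_antitone_of_eq_zero hk hkL
  have row_le (T : Finset ℕ) (c : ℕ) : ∑ b ∈ T, k (Nat.dist c b) ≤ 2 * L * k 0 := by
    simpa using sum_kernel_dist_le hk hkL T c
  calc |∑ a ∈ A, ∑ b ∈ B, k (endpointDist (a, r) (b, s)) - #A * #B * k (Nat.dist r s)|
      = |∑ a ∈ A, ∑ b ∈ B, (k (endpointDist (a, r) (b, s)) - k (Nat.dist r s))| := by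
        simp [mul_assoc]
    _ ≤ ∑ a ∈ A, ∑ b ∈ B, |k (endpointDist (a, r) (b, s)) - k (Nat.dist r s)| :=
        (abs_sum_le_sum_abs _ _).trans (sum_le_sum fun _ _ => abs_sum_le_sum_abs _ _)
    _ ≤ ∑ a ∈ A, ∑ b ∈ B, (k (Nat.dist a b) + k (Nat.dist s a) + k (Nat.dist r b)) := by
        gcongr with a _ b _
        exact abs_kernel_endpointDist_sub_le hk hk_nonneg a r b s
    _ = ∑ a ∈ A, ∑ b ∈ B, k (Nat.dist a b) + #B * ∑ a ∈ A, k (Nat.dist s a)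
          + #A * ∑ b ∈ B, k (Nat.dist r b) := by
        simp [sum_add_distrib, mul_sum]
    _ ≤ ∑ a ∈ A, 2 * L * k 0 + #B * (2 * L * k 0) + #A * (2 * L * k 0) := by
        gcongr <;> exact row_le _ _
    _ = (2 * #A + #B) * (2 * L * k 0) := by
        rw [sum_const, nsmul_eq_mul]
        ring

theorem weighted_dyad_pair_count_approx_general (hk : Antitone k)
    (hkL : ∀ h, L ≤ h → k h = 0) {n r s : ℕ} (hr : r ∈ Icc 1 n) (hs : s ∈ Icc 1 n) :
    |(∑ d ∈ (dyads n).filter (fun d => d.1 = r ∨ d.2 = r),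
        ∑ d' ∈ (dyads n).filter (fun d' => d'.1 = s ∨ d'.2 = s),
          k (endpointDist d d'))
      - ((n : R) - 1) ^ 2 * k (Nat.dist r s)|
      ≤ 6 * ((n : R) - 1) * L * k 0 := by
  have card_erase {t : ℕ} (ht : t ∈ Icc 1 n) : (#((Icc 1 n).erase t) : R) = n - 1 := by
    rw [cast_card_erase_of_mem ht, Nat.card_Icc, Nat.add_sub_cancel]
  have bound := abs_sum_sum_kernel_endpointDist_sub_le hk hkL ((Icc 1 n).erase r)
    ((Icc 1 n).erase s) r s
  simp only [sum_dyads_containing hr, sum_dyads_containing hs, endpointDist_dyadOf]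
  rw [card_erase hr, card_erase hs, ← sq] at bound
  exact bound.trans_eq (by ring)

end OrderedRing

lemma bartlett_antitone (L : ℕ) : Antitone (bartlett L) := fun a b hab => by
  unfold bartlett
  gcongr

lemma bartlett_zero_right (L : ℕ) : bartlett L 0 = 1 := by simp [bartlett]

lemma bartlett_eq_zero_of_le {L h : ℕ} (hL : 1 ≤ L) (hLh : L ≤ h) : bartlett L h = 0 := by
  have one_le_div : 1 ≤ (h : ℝ) / L :=
    (one_le_div₀ (by exact_mod_cast hL)).2 (by exact_mod_cast hLh)
  exact max_eq_left (sub_nonpos.2 one_le_div)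

/-- For `n ≥ 2`, `L ≥ 1`, `r, s ∈ {1,…,n}`, with
`W_{rs} = Σ_{d∋r} Σ_{d'∋s} k_L(Δ(d,d'))`, one has
`|W_{rs} − (n−1)² k_L(|r−s|)| ≤ 6 n L`. -/
theorem weighted_dyad_pair_count_approx (n L r s : ℕ) (hn : 2 ≤ n) (hL : 1 ≤ L)
    (hr : r ∈ Finset.Icc 1 n) (hs : s ∈ Finset.Icc 1 n) :
    |(∑ d ∈ (dyads n).filter (fun d => d.1 = r ∨ d.2 = r),
        ∑ d' ∈ (dyads n).filter (fun d' => d'.1 = s ∨ d'.2 = s),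
          bartlett L (endpointDist d d'))
      - ((n : ℝ) - 1) ^ 2 * bartlett L (Nat.dist r s)|
      ≤ 6 * (n : ℝ) * (L : ℝ) := by
  refine (weighted_dyad_pair_count_approx_general (bartlett_antitone L)
    (fun _ => bartlett_eq_zero_of_le hL) hr hs).trans ?_
  rw [bartlett_zero_right, mul_one]
  gcongr
  exact sub_le_self _ zero_le_one
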